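/- Let U ⊆ ℝⁿ be open, let v : ℝⁿ → ℝⁿ be a C¹ vector field, let Pe and μ be real constants, and let φ, φ† : ℝⁿ → ℝ be C² functions with φ†(x) > 0 for all x ∈ U, satisfying the adjoint eigenvalue equation −Pe v·∇φ† − Δφ† = μ φ† on U. Set β := φ φ† and Pe v* := Pe v φ φ† + φ ∇φ† − φ† ∇φ. Let w : ℝⁿ × ℝ → ℝ be C² in space and C¹ in time and define c(x,t) := φ(x) e^{−μ t} w(x,t). Then at every (x,t) ∈ U × ℝ, φ†(x) [ ∂ₜc + div( Pe v c − ∇c ) ](x,t) = e^{−μ t} [ β ∂ₜw + div( Pe v* w − β ∇w ) ](x,t); in particular, c satisfies the advection–diffusion equation ∂ₜc + div(Pe v c − ∇c) = 0 on U × ℝ if and only if w satisfies the modified equation β ∂ₜw + div(Pe v* w − β ∇w) = 0 on U × ℝ. (This is the full spectral decomposition c = φ e^{−ε⁻²λ t} w of Section 3.1.) -/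

import Mathlib

/-!
Write `J = Pe v (φ w) - ∇(φ w)`, so that `φ† div J = div (φ† J) - J · ∇φ†`. The adjoint equation
turns `-J · ∇φ†` into `μ φ φ† w + div (φ w ∇φ†)`. The first term cancels the contribution of
`∂ₜ e^{-μt}`, and `φ† J + φ w ∇φ†` is the flux `Pe v* w - β ∇w`. The spatial computation is carried
out one coordinate at a time in `flux_component`, with the adjoint operator left as a remainder;
summing over coordinates in `flux_identity` lets the adjoint equation be used.
The equivalence follows since `φ†` and the exponential do not vanish on `U`.
-/

/-- Gradient of a scalar field on `ℝⁿ` (components w.r.t. the standard basis). -/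
noncomputable def vgrad {n : ℕ} (f : (Fin n → ℝ) → ℝ) (x : Fin n → ℝ) : Fin n → ℝ :=
  fun i => fderiv ℝ f x (Pi.single i 1)

/-- Divergence of a vector field on `ℝⁿ`: `∑ i, ∂ᵢ Fᵢ`. -/
noncomputable def vdiv {n : ℕ} (F : (Fin n → ℝ) → (Fin n → ℝ)) (x : Fin n → ℝ) : ℝ :=
  ∑ i, fderiv ℝ (fun y => F y i) x (Pi.single i 1)

lemma differentiable_vgrad {n : ℕ} {f : (Fin n → ℝ) → ℝ} (hf : ContDiff ℝ 2 f) (i : Fin n) :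
    Differentiable ℝ (fun y => vgrad f y i) := by
  have h : ContDiff ℝ 1 (fderiv ℝ f) := hf.fderiv_right (by norm_num)
  exact (h.differentiable (by norm_num)).clm_apply (differentiable_const _)

/-- The `i`-th terms of the two divergences, at a fixed time, with `E` in the role of `e^{-μt}`.
They agree up to the `i`-th term of the adjoint operator applied to `φd`. -/
lemma flux_component {n : ℕ} {v : (Fin n → ℝ) → (Fin n → ℝ)} (hv : ContDiff ℝ 1 v)
    (Pe E : ℝ) {φ φd u : (Fin n → ℝ) → ℝ}
    (hφ : ContDiff ℝ 2 φ) (hφd : ContDiff ℝ 2 φd) (hu : ContDiff ℝ 2 u)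
    (x : Fin n → ℝ) (i : Fin n) :
    φd x * fderiv ℝ (fun y => Pe * v y i * (φ y * E * u y)
        - vgrad (fun z => φ z * E * u z) y i) x (Pi.single i 1)
      = E * fderiv ℝ (fun y =>
          (Pe * v y i * (φ y * φd y) + φ y * vgrad φd y i - φd y * vgrad φ y i) * u y
            - (φ y * φd y) * vgrad u y i) x (Pi.single i 1)
        + E * φ x * u x * (-Pe * (v x i * vgrad φd x i)
            - fderiv ℝ (fun y => vgrad φd y i) x (Pi.single i 1)) := by
  have dφ := hφ.differentiable (by norm_num)
  have dφd := hφd.differentiable (by norm_num)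
  have du := hu.differentiable (by norm_num)
  have grad_prod : ∀ y, vgrad (fun z => φ z * E * u z) y i
      = E * (φ y * vgrad u y i + u y * vgrad φ y i) := by
    intro y
    have h := (((dφ y).hasFDerivAt.mul_const E).mul (du y).hasFDerivAt).fderiv
    simp only [vgrad]
    erw [h]
    simp
    ring
  have hvi := (differentiable_pi.1 (hv.differentiable (by norm_num)) i x).hasFDerivAt
  have h1 := (dφ x).hasFDerivAt
  have h2 := (dφd x).hasFDerivAt
  have h3 := (du x).hasFDerivAt
  have g1 := (differentiable_vgrad hφ i x).hasFDerivAt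
  have g2 := (differentiable_vgrad hφd i x).hasFDerivAt
  have g3 := (differentiable_vgrad hu i x).hasFDerivAt
  simp only [grad_prod]
  have A := (((hvi.const_mul Pe).mul ((h1.mul_const E).mul h3)).sub
    (((h1.mul g3).add (h3.mul g1)).const_mul E)).fderiv
  have B := ((((((hvi.const_mul Pe).mul (h1.mul h2)).add (h1.mul g2)).sub (h2.mul g1)).mul h3).sub
    ((h1.mul h2).mul g3)).fderiv
  erw [A, B]
  simp
  simp only [vgrad]
  ring

/-- The spatial part of the decomposition; the term in `μ` is what the time derivative of
`e^{-μt}` compensates. -/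
lemma flux_identity {n : ℕ} {v : (Fin n → ℝ) → (Fin n → ℝ)} (hv : ContDiff ℝ 1 v)
    (Pe μ E : ℝ) {φ φd u : (Fin n → ℝ) → ℝ}
    (hφ : ContDiff ℝ 2 φ) (hφd : ContDiff ℝ 2 φd) (hu : ContDiff ℝ 2 u)
    (x : Fin n → ℝ)
    (hadj : -Pe * (∑ i, v x i * vgrad φd x i) - vdiv (vgrad φd) x = μ * φd x) :
    φd x * vdiv (fun y i => Pe * v y i * (φ y * E * u y)
        - vgrad (fun z => φ z * E * u z) y i) x
      = E * vdiv (fun y i =>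
          (Pe * v y i * (φ y * φd y) + φ y * vgrad φd y i - φd y * vgrad φ y i) * u y
            - (φ y * φd y) * vgrad u y i) x
        + E * φ x * u x * (μ * φd x) := by
  rw [← hadj]
  simp only [vdiv]
  rw [Finset.mul_sum, Finset.sum_congr rfl fun i _ => flux_component hv Pe E hφ hφd hu x i,
    Finset.sum_add_distrib, ← Finset.mul_sum, ← Finset.mul_sum, Finset.sum_sub_distrib,
    ← Finset.mul_sum]

/-- The full spectral decomposition `c = φ e^{−μt} w` of Section 3.1:
`φ† [∂ₜc + div(Pe v c − ∇c)] = e^{−μt} [β ∂ₜw + div(Pe v* w − β∇w)]`,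
with `β = φφ†` and `Pe v* = Pe v φφ† + φ∇φ† − φ†∇φ`; in particular `c` solves the
advection–diffusion equation on `U × ℝ` iff `w` solves the modified equation. -/
theorem full_spectral_decomposition {n : ℕ}
    (U : Set (Fin n → ℝ)) (hU : IsOpen U)
    (v : (Fin n → ℝ) → (Fin n → ℝ)) (hv : ContDiff ℝ 1 v)
    (Pe μ : ℝ) (φ φd : (Fin n → ℝ) → ℝ)
    (hφ : ContDiff ℝ 2 φ) (hφd : ContDiff ℝ 2 φd)
    (hφdpos : ∀ x ∈ U, 0 < φd x)
    (hadj : ∀ x ∈ U,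
      -Pe * (∑ i, v x i * vgrad φd x i) - vdiv (vgrad φd) x = μ * φd x)
    (w : (Fin n → ℝ) → ℝ → ℝ)
    (hw_space : ∀ t, ContDiff ℝ 2 (fun x => w x t))
    (hw_time : ∀ x, ContDiff ℝ 1 (fun t => w x t)) :
    (∀ x ∈ U, ∀ t : ℝ,
      φd x *
        (deriv (fun s => φ x * Real.exp (-μ * s) * w x s) t
          + vdiv (fun y i =>
              Pe * v y i * (φ y * Real.exp (-μ * t) * w y t)
                - vgrad (fun z => φ z * Real.exp (-μ * t) * w z t) y i) x)
      = Real.exp (-μ * t) *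
          (φ x * φd x * deriv (fun s => w x s) t
            + vdiv (fun y i =>
                (Pe * v y i * (φ y * φd y) + φ y * vgrad φd y i - φd y * vgrad φ y i)
                    * w y t
                  - (φ y * φd y) * vgrad (fun z => w z t) y i) x))
    ∧
    ((∀ x ∈ U, ∀ t : ℝ,
        deriv (fun s => φ x * Real.exp (-μ * s) * w x s) t
          + vdiv (fun y i =>
              Pe * v y i * (φ y * Real.exp (-μ * t) * w y t)
                - vgrad (fun z => φ z * Real.exp (-μ * t) * w z t) y i) x = 0)
      ↔
      (∀ x ∈ U, ∀ t : ℝ,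
        φ x * φd x * deriv (fun s => w x s) t
          + vdiv (fun y i =>
              (Pe * v y i * (φ y * φd y) + φ y * vgrad φd y i - φd y * vgrad φ y i)
                  * w y t
                - (φ y * φd y) * vgrad (fun z => w z t) y i) x = 0)) := by
  have key : ∀ x ∈ U, ∀ t : ℝ,
      φd x *
        (deriv (fun s => φ x * Real.exp (-μ * s) * w x s) t
          + vdiv (fun y i =>
              Pe * v y i * (φ y * Real.exp (-μ * t) * w y t)
                - vgrad (fun z => φ z * Real.exp (-μ * t) * w z t) y i) x)
      = Real.exp (-μ * t) *
          (φ x * φd x * deriv (fun s => w x s) t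
            + vdiv (fun y i =>
                (Pe * v y i * (φ y * φd y) + φ y * vgrad φd y i - φd y * vgrad φ y i)
                    * w y t
                  - (φ y * φd y) * vgrad (fun z => w z t) y i) x) := by
    intro x hx t
    have hw := ((hw_time x).differentiable (by norm_num) t).hasDerivAt
    have hE : HasDerivAt (fun s => Real.exp (-μ * s)) (Real.exp (-μ * t) * -μ) t := by
      simpa using ((hasDerivAt_id t).const_mul (-μ)).exp
    have ht : deriv (fun s => φ x * Real.exp (-μ * s) * w x s) t
        = φ x * (Real.exp (-μ * t) * -μ) * w x t
          + φ x * Real.exp (-μ * t) * deriv (fun s => w x s) t :=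
      ((hE.const_mul (φ x)).mul hw).deriv
    rw [mul_add, ht,
      flux_identity hv Pe μ (Real.exp (-μ * t)) hφ hφd (hw_space t) x (hadj x hx)]
    ring
  refine ⟨key, ?_, ?_⟩
  · intro h x hx t
    have hk := key x hx t
    rw [h x hx t, mul_zero] at hk
    exact (mul_eq_zero.1 hk.symm).resolve_left (Real.exp_ne_zero _)
  · intro h x hx t
    have hk := key x hx t
    rw [h x hx t, mul_zero] at hk
    exact (mul_eq_zero.1 hk).resolve_left (hφdpos x hx).ne'
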